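/- Let n ≥ 1 and k ≥ 1 and m ≥ 0 be integers and let d be a real number with 0 ≤ d ≤ n. The expected number of k-element vertex subsets S of {1,…,n} whose induced subgraph in the Erdős–Rényi random graph G(n, d/n) has at least k + m edges is at most k^{2k+2m} d^{k+m} / n^m. -/

import Mathlib

/-!
This is a first moment bound. If the graph induced on a `k`-set `S` has at least `k + m` edges,
then some `(k + m)`-element set `T` of pairs from `S` consists of present edges
(`exists_present_edges`), so the number of such `S` is at most the number of pairs `(S, T)` with all
of `T` present. A fixed `T` is present with probability `(d / n) ^ (k + m)` (`erdosRenyi_present`).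
There are at most `n ^ k` sets `S` and, for each of them, at most `(k ^ 2) ^ (k + m)` sets `T`, which
gives `n ^ k * k ^ (2k + 2m) * (d / n) ^ (k + m)`.
-/

open MeasureTheory
open scoped NNReal ENNReal

/-- The Bernoulli measure on `Bool` with success probability `p`. -/
noncomputable def bernoulliMeasure (p : ℝ≥0) : Measure Bool :=
  p • Measure.dirac true + (1 - p) • Measure.dirac false

/-- The Erdős–Rényi random graph measure: each potential edge (an element of
`Sym2 (Fin n)`) is present independently with probability `p`. -/
noncomputable def erdosRenyi (n : ℕ) (p : ℝ≥0) : Measure (Sym2 (Fin n) → Bool) :=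
  Measure.pi fun _ => bernoulliMeasure p

/-- The simple graph on `Fin n` determined by an edge-indicator function. -/
def graphOf {n : ℕ} (ω : Sym2 (Fin n) → Bool) : SimpleGraph (Fin n) :=
  SimpleGraph.fromEdgeSet {e | ω e = true}

lemma isProbabilityMeasure_bernoulliMeasure {p : ℝ≥0} (hp : p ≤ 1) :
    IsProbabilityMeasure (bernoulliMeasure p) := by
  constructor
  simp only [bernoulliMeasure, Measure.add_apply, Measure.smul_apply, measure_univ]
  rw [ENNReal.smul_def, ENNReal.smul_def, smul_eq_mul, smul_eq_mul, mul_one, mul_one,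
    ← ENNReal.coe_add, add_tsub_cancel_of_le hp, ENNReal.coe_one]

lemma bernoulliMeasure_true (p : ℝ≥0) : bernoulliMeasure p {true} = p := by
  rw [bernoulliMeasure, Measure.add_apply, Measure.smul_apply, Measure.smul_apply,
    Measure.dirac_apply_of_mem (Set.mem_singleton _), Measure.dirac_apply' _ (by measurability)]
  rw [ENNReal.smul_def, ENNReal.smul_def, Set.indicator_of_notMem (by simp)]
  simp only [smul_eq_mul, mul_one, mul_zero, add_zero]

lemma erdosRenyi_present {n : ℕ} {p : ℝ≥0} (hp : p ≤ 1) (T : Finset (Sym2 (Fin n))) :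
    erdosRenyi n p {ω | ∀ e ∈ T, ω e = true} = (p : ℝ≥0∞) ^ T.card := by
  classical
  have := isProbabilityMeasure_bernoulliMeasure hp
  have h : {ω : Sym2 (Fin n) → Bool | ∀ e ∈ T, ω e = true}
      = Set.pi Set.univ (fun e => if e ∈ T then {true} else Set.univ) := by
    ext ω
    simp only [Set.mem_ofPred_eq, Set.mem_pi, Set.mem_univ, true_imp_iff]
    refine forall_congr' fun e => ?_
    by_cases he : e ∈ T <;> simp [he]
  rw [h, erdosRenyi, Measure.pi_pi]
  have h2 : ∀ e, bernoulliMeasure p (if e ∈ T then {true} else Set.univ)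
      = if e ∈ T then (p : ℝ≥0∞) else 1 := by
    intro e
    split_ifs
    · exact bernoulliMeasure_true p
    · exact measure_univ
  rw [Finset.prod_congr rfl fun e _ => h2 e, Finset.prod_ite]
  simp

/-- The set `T` is taken inside `S.sym2`, which also contains the diagonal pairs; these only enlarge
the count of candidates. -/
lemma exists_present_edges {n r : ℕ} (ω : Sym2 (Fin n) → Bool) (S : Finset (Fin n))
    (h : r ≤ ((graphOf ω).induce (S : Set (Fin n))).edgeSet.ncard) :
    ∃ T ∈ S.sym2.powersetCard r, ∀ e ∈ T, ω e = true := by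
  classical
  have hle : ((graphOf ω).induce (S : Set (Fin n))).edgeSet.ncard
      ≤ (S.sym2.filter (fun e => ω e = true)).card := by
    rw [← Set.ncard_coe_finset]
    refine Set.ncard_le_ncard_of_injOn (Sym2.map Subtype.val) ?_
      (Sym2.map.injective Subtype.val_injective).injOn
    intro e
    induction e using Sym2.ind with
    | _ a b =>
      intro hab
      have ha : (a : Fin n) ∈ S := a.2
      have hb : (b : Fin n) ∈ S := b.2
      have hω : ω s(a, b) = true := by
        simp [graphOf] at hab
        exact hab.1
      simp [ha, hb, hω]
  obtain ⟨T, hT, hc⟩ := Finset.exists_subset_card_eq (h.trans hle)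
  refine ⟨T, Finset.mem_powersetCard.2 ⟨hT.trans (Finset.filter_subset _ _), hc⟩, fun e he => ?_⟩
  exact (Finset.mem_filter.1 (hT he)).2

lemma card_pairs_le {n k r : ℕ} {S : Finset (Fin n)} (hS : S.card = k) :
    (S.sym2.powersetCard r).card ≤ k ^ (2 * r) := by
  rw [Finset.card_powersetCard, Finset.card_sym2, hS, pow_mul]
  refine (Nat.choose_le_pow _ _).trans (Nat.pow_le_pow_left ?_ _)
  rw [Nat.choose_two_right]
  refine Nat.div_le_of_le_mul ?_
  cases k with
  | zero => simp
  | succ k => simp only [Nat.add_sub_cancel]; nlinarith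

/-- The expected number of `k`-element vertex subsets whose induced subgraph in
`G(n, d/n)` has at least `k + m` edges is at most `k^(2k+2m) d^(k+m) / n^m`. -/
theorem expected_dense_induced_subgraphs_le
    (n k m : ℕ) (hn : 1 ≤ n) (hk : 1 ≤ k)
    (d : ℝ) (hd0 : 0 ≤ d) (hdn : d ≤ n) :
    ∫⁻ ω, (({S : Finset (Fin n) | S.card = k ∧
          k + m ≤ ((graphOf ω).induce (S : Set (Fin n))).edgeSet.ncard}).ncard : ℝ≥0∞)
        ∂ erdosRenyi n (Real.toNNReal (d / n))
      ≤ ENNReal.ofReal ((k : ℝ) ^ (2 * k + 2 * m) * d ^ (k + m) / (n : ℝ) ^ m) := by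
  classical
  set p : ℝ≥0 := Real.toNNReal (d / n) with hpdef
  have hn0 : (0 : ℝ) < n := by exact_mod_cast hn
  have hp : p ≤ 1 := Real.toNNReal_le_one.2 ((div_le_one hn0).2 hdn)
  have hmeas : ∀ T : Finset (Sym2 (Fin n)),
      MeasurableSet {ω : Sym2 (Fin n) → Bool | ∀ e ∈ T, ω e = true} :=
    fun T => (Set.toFinite _).measurableSet
  have hpoint : ∀ ω : Sym2 (Fin n) → Bool,
      (({S : Finset (Fin n) | S.card = k ∧
          k + m ≤ ((graphOf ω).induce (S : Set (Fin n))).edgeSet.ncard}).ncard : ℝ≥0∞)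
      ≤ ∑ S ∈ (Finset.univ : Finset (Fin n)).powersetCard k,
          ∑ T ∈ S.sym2.powersetCard (k + m),
            Set.indicator {ω : Sym2 (Fin n) → Bool | ∀ e ∈ T, ω e = true} 1 ω := by
    intro ω
    have hset : {S : Finset (Fin n) | S.card = k ∧
          k + m ≤ ((graphOf ω).induce (S : Set (Fin n))).edgeSet.ncard}
        = (((Finset.univ : Finset (Fin n)).powersetCard k).filter (fun S : Finset (Fin n) =>
          k + m ≤ ((graphOf ω).induce (S : Set (Fin n))).edgeSet.ncard) :
            Finset (Finset (Fin n))) := by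
      ext S
      simp [Finset.mem_powersetCard]
    rw [hset, Set.ncard_coe_finset, Finset.card_filter, Nat.cast_sum]
    refine Finset.sum_le_sum fun S _ => ?_
    split_ifs with h
    · obtain ⟨T, hT, hω⟩ := exists_present_edges ω S h
      have h1 : Set.indicator {ω : Sym2 (Fin n) → Bool | ∀ e ∈ T, ω e = true}
          (1 : (Sym2 (Fin n) → Bool) → ℝ≥0∞) ω = 1 :=
        Set.indicator_of_mem (Set.mem_ofPred_eq.symm ▸ hω) _
      rw [Nat.cast_one, ← h1]
      exact Finset.single_le_sum (f := fun T => Set.indicator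
        {ω : Sym2 (Fin n) → Bool | ∀ e ∈ T, ω e = true} (1 : (Sym2 (Fin n) → Bool) → ℝ≥0∞) ω)
        (fun _ _ => zero_le) hT
    · simp
  refine (lintegral_mono hpoint).trans ?_
  rw [lintegral_finsetSum _ fun S _ => Finset.measurable_fun_sum _ fun T _ =>
    measurable_one.indicator (hmeas T)]
  have hS : ∀ S ∈ (Finset.univ : Finset (Fin n)).powersetCard k,
      ∫⁻ ω, ∑ T ∈ S.sym2.powersetCard (k + m),
        Set.indicator {ω : Sym2 (Fin n) → Bool | ∀ e ∈ T, ω e = true} 1 ω ∂ erdosRenyi n p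
      ≤ ((k ^ (2 * (k + m)) : ℕ) : ℝ≥0∞) * (p : ℝ≥0∞) ^ (k + m) := by
    intro S hS
    rw [lintegral_finsetSum _ fun T _ => measurable_one.indicator (hmeas T)]
    have hT : ∀ T ∈ S.sym2.powersetCard (k + m),
        ∫⁻ ω, Set.indicator {ω : Sym2 (Fin n) → Bool | ∀ e ∈ T, ω e = true} 1 ω ∂ erdosRenyi n p
          = (p : ℝ≥0∞) ^ (k + m) := by
      intro T hT
      rw [lintegral_indicator_one (hmeas T), erdosRenyi_present hp,
        (Finset.mem_powersetCard.1 hT).2]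
    rw [Finset.sum_congr rfl hT, Finset.sum_const, nsmul_eq_mul]
    gcongr
    exact card_pairs_le (Finset.mem_powersetCard.1 hS).2
  refine (Finset.sum_le_sum hS).trans ?_
  rw [Finset.sum_const, nsmul_eq_mul, Finset.card_powersetCard, Finset.card_univ, Fintype.card_fin]
  calc _ ≤ ((n ^ k : ℕ) : ℝ≥0∞) * (((k ^ (2 * (k + m)) : ℕ) : ℝ≥0∞) * (p : ℝ≥0∞) ^ (k + m)) := by
        gcongr
        exact Nat.choose_le_pow _ _
    _ = ENNReal.ofReal ((n : ℝ) ^ k * ((k : ℝ) ^ (2 * (k + m)) * (d / n) ^ (k + m))) := by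
        have hq : (0 : ℝ) ≤ d / n := by positivity
        rw [ENNReal.ofReal_mul (by positivity), ENNReal.ofReal_mul (by positivity),
          ENNReal.ofReal_pow hq, ← Nat.cast_pow, ← Nat.cast_pow, ENNReal.ofReal_natCast,
          ENNReal.ofReal_natCast]
        rfl
    _ = _ := by
        congr 1
        rw [div_pow, pow_add (n : ℝ) k m, mul_add]
        field_simp
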